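/- For all integers i, j and every integer k ≥ 1, the bimoment determinants satisfy the bilinear identity E_{k+1}^{(i,j−1)} F_{k−1}^{(i+1,j)} = F_k^{(i,j−1)} E_k^{(i+1,j)} − G_k^{(j−1,i+1)} G_k^{(i,j)}. -/

import Mathlib

open Finset

/-- Single moments `α_i = Σ_p ζ_p^i a_p`. -/
noncomputable def alphaM (n : ℕ) (ζ a : Fin n → ℝ) (i : ℤ) : ℝ :=
  ∑ p : Fin n, ζ p ^ i * a p

/-- Bimoments `I_{i,j} = Σ_p Σ_q ζ_p^i ζ_q^j / (ζ_p + ζ_q) a_p a_q`. -/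
noncomputable def Imom (n : ℕ) (ζ a : Fin n → ℝ) (i j : ℤ) : ℝ :=
  ∑ p : Fin n, ∑ q : Fin n, ζ p ^ i * ζ q ^ j / (ζ p + ζ q) * (a p * a q)

/-- `F_k^{(i,j)} = det (I_{i+r,j+s})_{0 ≤ r,s ≤ k-1}`, with `F_0 = 1` and `F_k = 0` for `k < 0`. -/
noncomputable def Fdet (n : ℕ) (ζ a : Fin n → ℝ) (i j k : ℤ) : ℝ :=
  if k < 0 then 0
  else Matrix.det (Matrix.of fun r s : Fin k.toNat =>
    Imom n ζ a (i + ((r : ℕ) : ℤ)) (j + ((s : ℕ) : ℤ)))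

/-- `G_k^{(i,j)}`: first column `(α_{i-1}, …, α_{i+k-2})ᵀ`, remaining block
`(I_{i+r,j+s})_{0 ≤ r ≤ k-1, 0 ≤ s ≤ k-2}`; `G_1 = α_{i-1}` and `G_k = 0` for `k < 1`. -/
noncomputable def Gdet (n : ℕ) (ζ a : Fin n → ℝ) (i j k : ℤ) : ℝ :=
  if k < 1 then 0
  else Matrix.det (Matrix.of fun r s : Fin k.toNat =>
    if (s : ℕ) = 0 then alphaM n ζ a (i - 1 + ((r : ℕ) : ℤ))
    else Imom n ζ a (i + ((r : ℕ) : ℤ)) (j + (((s : ℕ) - 1 : ℕ) : ℤ)))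

/-- `E_k^{(i,j)}`: `(1,1)` entry `0`, first row `(0, α_{j-1}, …, α_{j+k-3})`, first column
`(0, α_{i-1}, …, α_{i+k-3})ᵀ`, remaining block `(I_{i+r,j+s})_{0 ≤ r,s ≤ k-2}`;
`E_k = 0` for `k < 2`. -/
noncomputable def Edet (n : ℕ) (ζ a : Fin n → ℝ) (i j k : ℤ) : ℝ :=
  if k < 2 then 0
  else Matrix.det (Matrix.of fun r s : Fin k.toNat =>
    if (r : ℕ) = 0 then
      (if (s : ℕ) = 0 then 0 else alphaM n ζ a (j - 1 + (((s : ℕ) - 1 : ℕ) : ℤ)))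
    else if (s : ℕ) = 0 then alphaM n ζ a (i - 1 + (((r : ℕ) - 1 : ℕ) : ℤ))
    else Imom n ζ a (i + (((r : ℕ) - 1 : ℕ) : ℤ)) (j + (((s : ℕ) - 1 : ℕ) : ℤ)))

/-- Block form of the Desnanot-Jacobi identity, before cancelling `det A`. -/
theorem jacobi_block_aux {R : Type*} [CommRing R] {m : Type*} [Fintype m] [DecidableEq m]
    (A : Matrix (Fin 2 ⊕ m) (Fin 2 ⊕ m) R) :
    A.det * A.adjugate.toBlocks₁₁.det = A.det ^ 2 * A.toBlocks₂₂.det := by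
  have hmul : A * Matrix.fromBlocks A.adjugate.toBlocks₁₁ 0 A.adjugate.toBlocks₂₁
        (1 : Matrix m m R)
      = Matrix.fromBlocks (A.det • 1) A.toBlocks₁₂ 0 A.toBlocks₂₂ := by
    have h := A.mul_adjugate
    ext r s
    have hrs := congrFun (congrFun h r) s
    rcases s with s | s
    · have : (A * Matrix.fromBlocks A.adjugate.toBlocks₁₁ 0 A.adjugate.toBlocks₂₁
        (1 : Matrix m m R)) r (Sum.inl s)
          = (A * A.adjugate) r (Sum.inl s) := by
        simp [Matrix.mul_apply, Matrix.toBlocks₁₁, Matrix.toBlocks₂₁]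
      rw [this, hrs]
      rcases r with r | r <;> simp [Matrix.one_apply]
    · rcases r with r | r <;>
        simp [Matrix.mul_apply, Matrix.toBlocks₁₂, Matrix.toBlocks₂₂, Matrix.one_apply]
  have hdet := congrArg Matrix.det hmul
  rw [Matrix.det_mul, Matrix.det_fromBlocks_zero₁₂, Matrix.det_fromBlocks_zero₂₁] at hdet
  simpa using hdet

/-- Block form of the Desnanot-Jacobi identity. -/
theorem jacobi_block {R : Type*} [CommRing R] {m : Type*} [Fintype m] [DecidableEq m]
    (A : Matrix (Fin 2 ⊕ m) (Fin 2 ⊕ m) R) :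
    A.adjugate.toBlocks₁₁.det = A.det * A.toBlocks₂₂.det := by
  let X := Matrix.mvPolynomialX (Fin 2 ⊕ m) (Fin 2 ⊕ m) ℤ
  have hX : X.adjugate.toBlocks₁₁.det = X.det * X.toBlocks₂₂.det := by
    apply mul_left_cancel₀ (show X.det ≠ 0 from Matrix.det_mvPolynomialX_ne_zero _ ℤ)
    rw [jacobi_block_aux]; ring
  let f := (MvPolynomial.aeval (R := ℤ) fun p : (Fin 2 ⊕ m) × (Fin 2 ⊕ m) => A p.1 p.2)
  have hA : f.mapMatrix X = A := Matrix.mvPolynomialX_mapMatrix_aeval ℤ A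
  have h := congrArg f hX
  rw [map_mul, AlgHom.map_det, AlgHom.map_det, AlgHom.map_det, hA] at h
  have h1 : f.mapMatrix X.adjugate.toBlocks₁₁ = A.adjugate.toBlocks₁₁ := by
    conv_rhs => rw [← hA, ← AlgHom.map_adjugate]
    rfl
  have h2 : f.mapMatrix X.toBlocks₂₂ = A.toBlocks₂₂ := by
    conv_rhs => rw [← hA]
    rfl
  rwa [h1, h2] at h

/-- Desnanot-Jacobi identity for the first two rows and columns. -/
theorem desnanot_jacobi {R : Type*} [CommRing R] {m : ℕ}
    (A : Matrix (Fin (m + 2)) (Fin (m + 2)) R) :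
    A.det * (A.submatrix (fun r : Fin m => r.succ.succ) (fun r : Fin m => r.succ.succ)).det =
      (A.submatrix Fin.succ Fin.succ).det *
        (A.submatrix (Fin.succAbove 1) (Fin.succAbove 1)).det -
      (A.submatrix Fin.succ (Fin.succAbove 1)).det *
        (A.submatrix (Fin.succAbove 1) Fin.succ).det := by
  let e : Fin 2 ⊕ Fin m ≃ Fin (m + 2) := finSumFinEquiv.trans (finCongr (Nat.add_comm 2 m))
  have h0 : e (Sum.inl 0) = 0 := by ext; simp [e]
  have h1 : e (Sum.inl 1) = 1 := by ext; simp [e]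
  have h2 : ∀ r, e (Sum.inr r) = r.succ.succ := by intro r; ext; simp [e]
  have h := jacobi_block (A.submatrix e e)
  have hb : (A.submatrix e e).toBlocks₂₂
      = A.submatrix (fun r : Fin m => r.succ.succ) (fun r : Fin m => r.succ.succ) := by
    ext r s; simp [Matrix.toBlocks₂₂, h2]
  rw [Matrix.det_submatrix_equiv_self, hb, Matrix.adjugate_submatrix_equiv_self,
    Matrix.det_fin_two] at h
  rw [← h]
  simp only [Matrix.toBlocks₁₁, Matrix.of_apply, Matrix.submatrix_apply, h0, h1,
    Matrix.adjugate_fin_succ_eq_det_submatrix]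
  simp
  try ring

theorem val_succAbove_one {m : ℕ} (r : Fin (m + 1)) :
    ((Fin.succAbove (1 : Fin (m + 2)) r : Fin (m + 2)) : ℕ)
      = if (r : ℕ) = 0 then 0 else (r : ℕ) + 1 := by
  refine Fin.cases ?_ (fun s => ?_) r
  · simp
  · simp

theorem Imom_symm (n : ℕ) (ζ a : Fin n → ℝ) (i j : ℤ) : Imom n ζ a i j = Imom n ζ a j i := by
  unfold Imom
  rw [Finset.sum_comm]
  refine Finset.sum_congr rfl fun p _ => Finset.sum_congr rfl fun q _ => ?_
  rw [add_comm (ζ q), mul_comm (ζ q ^ i), mul_comm (a q)]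

noncomputable def FmatX (n : ℕ) (ζ a : Fin n → ℝ) (i j : ℤ) (k : ℕ) : Matrix (Fin k) (Fin k) ℝ :=
  Matrix.of fun r s : Fin k => Imom n ζ a (i + ((r : ℕ) : ℤ)) (j + ((s : ℕ) : ℤ))

noncomputable def GmatX (n : ℕ) (ζ a : Fin n → ℝ) (i j : ℤ) (k : ℕ) : Matrix (Fin k) (Fin k) ℝ :=
  Matrix.of fun r s : Fin k =>
    if (s : ℕ) = 0 then alphaM n ζ a (i - 1 + ((r : ℕ) : ℤ))
    else Imom n ζ a (i + ((r : ℕ) : ℤ)) (j + (((s : ℕ) - 1 : ℕ) : ℤ))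

noncomputable def EmatX (n : ℕ) (ζ a : Fin n → ℝ) (i j : ℤ) (k : ℕ) : Matrix (Fin k) (Fin k) ℝ :=
  Matrix.of fun r s : Fin k =>
    if (r : ℕ) = 0 then
      (if (s : ℕ) = 0 then 0 else alphaM n ζ a (j - 1 + (((s : ℕ) - 1 : ℕ) : ℤ)))
    else if (s : ℕ) = 0 then alphaM n ζ a (i - 1 + (((r : ℕ) - 1 : ℕ) : ℤ))
    else Imom n ζ a (i + (((r : ℕ) - 1 : ℕ) : ℤ)) (j + (((s : ℕ) - 1 : ℕ) : ℤ))

theorem Fdet_nat (n : ℕ) (ζ a : Fin n → ℝ) (i j : ℤ) (k : ℕ) :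
    Fdet n ζ a i j (k : ℤ) = (FmatX n ζ a i j k).det := by
  unfold Fdet
  rw [if_neg (by omega)]
  rfl

theorem Gdet_nat (n : ℕ) (ζ a : Fin n → ℝ) (i j : ℤ) (k : ℕ) :
    Gdet n ζ a i j ((k + 1 : ℕ) : ℤ) = (GmatX n ζ a i j (k + 1)).det := by
  unfold Gdet
  rw [if_neg (by omega)]
  rfl

theorem Edet_nat (n : ℕ) (ζ a : Fin n → ℝ) (i j : ℤ) (k : ℕ) (hk : 1 ≤ k) :
    Edet n ζ a i j (k : ℤ) = (EmatX n ζ a i j k).det := by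
  unfold Edet
  split_ifs with h
  · obtain rfl : k = 1 := by omega
    simp [EmatX]
  · rfl

/-- Lemma 2.8, identity (2.16): for all `i, j ∈ ℤ` and `k ≥ 1`,
`E_{k+1}^{(i,j-1)} F_{k-1}^{(i+1,j)} = F_k^{(i,j-1)} E_k^{(i+1,j)} - G_k^{(j-1,i+1)} G_k^{(i,j)}`. -/
theorem stmt_7 (n : ℕ) (hn : 1 ≤ n) (ζ a : Fin n → ℝ)
    (hζ0 : ∀ p, 0 < ζ p) (hζmono : StrictMono ζ) (ha : ∀ p, 0 < a p)
    (i j k : ℤ) (hk : 1 ≤ k) :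
    Edet n ζ a i (j - 1) (k + 1) * Fdet n ζ a (i + 1) j (k - 1) =
      Fdet n ζ a i (j - 1) k * Edet n ζ a (i + 1) j k -
        Gdet n ζ a (j - 1) (i + 1) k * Gdet n ζ a i j k := by
  obtain ⟨m, rfl⟩ : ∃ m : ℕ, k = ((m + 1 : ℕ) : ℤ) := ⟨(k - 1).toNat, by omega⟩
  have e1 : ((m + 1 : ℕ) : ℤ) + 1 = ((m + 2 : ℕ) : ℤ) := by push_cast; ring
  have e2 : ((m + 1 : ℕ) : ℤ) - 1 = ((m : ℕ) : ℤ) := by push_cast; ring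
  have hJ := desnanot_jacobi (EmatX n ζ a i (j - 1) (m + 2))
  rw [e1, e2, Edet_nat _ _ _ _ _ _ (by omega), Edet_nat _ _ _ _ _ _ (by omega), Fdet_nat,
    Fdet_nat, Gdet_nat, Gdet_nat]
  rw [← Matrix.det_transpose (GmatX n ζ a (j - 1) (i + 1) (m + 1))]
  have h1 : (EmatX n ζ a i (j - 1) (m + 2)).submatrix (fun r : Fin m => r.succ.succ)
      (fun r : Fin m => r.succ.succ) = FmatX n ζ a (i + 1) j m := by
    ext r s
    simp only [EmatX, FmatX, Matrix.submatrix_apply, Matrix.of_apply, Fin.val_succ]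
    rw [if_neg (by omega), if_neg (by omega)]
    congr 1 <;> push_cast <;> omega
  have h2 : (EmatX n ζ a i (j - 1) (m + 2)).submatrix Fin.succ Fin.succ
      = FmatX n ζ a i (j - 1) (m + 1) := by
    ext r s
    simp only [EmatX, FmatX, Matrix.submatrix_apply, Matrix.of_apply, Fin.val_succ]
    rw [if_neg (by omega), if_neg (by omega)]
    congr 1
  have h3 : (EmatX n ζ a i (j - 1) (m + 2)).submatrix (Fin.succAbove 1) (Fin.succAbove 1)
      = EmatX n ζ a (i + 1) j (m + 1) := by
    ext r s
    simp only [EmatX, Matrix.submatrix_apply, Matrix.of_apply, val_succAbove_one]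
    by_cases hr : (r : ℕ) = 0 <;> by_cases hs : (s : ℕ) = 0 <;> simp [hr, hs] <;>
      (congr 1 <;> omega)
  have h4 : (EmatX n ζ a i (j - 1) (m + 2)).submatrix Fin.succ (Fin.succAbove 1)
      = GmatX n ζ a i j (m + 1) := by
    ext r s
    simp only [EmatX, GmatX, Matrix.submatrix_apply, Matrix.of_apply, val_succAbove_one,
      Fin.val_succ]
    by_cases hr : (r : ℕ) = 0 <;> by_cases hs : (s : ℕ) = 0 <;> simp [hr, hs] <;>
      (congr 1 <;> omega)
  have h5 : (EmatX n ζ a i (j - 1) (m + 2)).submatrix (Fin.succAbove 1) Fin.succ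
      = (GmatX n ζ a (j - 1) (i + 1) (m + 1)).transpose := by
    ext r s
    simp only [EmatX, GmatX, Matrix.submatrix_apply, Matrix.of_apply, val_succAbove_one,
      Fin.val_succ, Matrix.transpose_apply]
    rw [Imom_symm n ζ a (j - 1 + _)]
    by_cases hr : (r : ℕ) = 0 <;> by_cases hs : (s : ℕ) = 0 <;> simp [hr, hs] <;>
      (congr 1 <;> omega)
  rw [h1, h2, h3, h4, h5] at hJ
  rw [hJ]
  ring
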